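/- Let G be a simple graph on n vertices, let t ≥ 2 be an integer, and let c = (c_i)_{i≥1} be a cost vector of nonnegative reals such that c_{i+1} - c_i ≤ c_t for all i ≥ t. If G' is a spanning subgraph of G, then for every integer b ≥ t + 1, π*_t(G', c) ≤ π*_t(G, c) + 2·c_t·n^t/(b-t)^{t-1} + c_t·C(b,t)·|E(G) \ E(G')|·n^{t-2}, where C(b,t) denotes the binomial coefficient b choose t. -/

import Mathlib

open scoped Classical
open Finset

/-- `K` is a clique of `G`: a nonempty set of pairwise adjacent vertices. -/
def IsCliqueOf {V : Type} [Fintype V] [DecidableEq V] (G : SimpleGraph V) (K : Finset V) : Prop :=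
  K.Nonempty ∧ G.IsClique (K : Set V)

/-- Total `c`-cost of a weighting `f` of the finsets of vertices. -/
noncomputable def cliqueCost {V : Type} [Fintype V] [DecidableEq V]
    (c : ℕ → ℝ) (f : Finset V → ℝ) : ℝ :=
  ∑ K : Finset V, c K.card * f K

/-- `f` is a fractional `t`-clique cover of `G`. -/
def IsFracCover {V : Type} [Fintype V] [DecidableEq V]
    (t : ℕ) (G : SimpleGraph V) (f : Finset V → ℝ) : Prop :=
  (∀ K, 0 ≤ f K) ∧ (∀ K, ¬ IsCliqueOf G K → f K = 0) ∧
  ∀ T : Finset V, T.card = t → G.IsClique (T : Set V) →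
    1 ≤ ∑ K ∈ Finset.univ.filter (fun K => T ⊆ K), f K

/-- `f` is a fractional `t`-clique decomposition of `G`. -/
def IsFracDecomp {V : Type} [Fintype V] [DecidableEq V]
    (t : ℕ) (G : SimpleGraph V) (f : Finset V → ℝ) : Prop :=
  (∀ K, 0 ≤ f K) ∧ (∀ K, ¬ IsCliqueOf G K → f K = 0) ∧
  ∀ T : Finset V, T.card = t → G.IsClique (T : Set V) →
    ∑ K ∈ Finset.univ.filter (fun K => T ⊆ K), f K = 1

/-- `f` is an integer (`{0,1}`-valued) `t`-clique cover of `G`. -/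
def IsIntCover {V : Type} [Fintype V] [DecidableEq V]
    (t : ℕ) (G : SimpleGraph V) (f : Finset V → ℝ) : Prop :=
  IsFracCover t G f ∧ ∀ K, f K = 0 ∨ f K = 1

/-- `f` is an integer (`{0,1}`-valued) `t`-clique decomposition of `G`. -/
def IsIntDecomp {V : Type} [Fintype V] [DecidableEq V]
    (t : ℕ) (G : SimpleGraph V) (f : Finset V → ℝ) : Prop :=
  IsFracDecomp t G f ∧ ∀ K, f K = 0 ∨ f K = 1

/-- θ*_t(G,c): minimum total c-cost of a fractional t-clique cover. -/
noncomputable def thetaFrac {V : Type} [Fintype V] [DecidableEq V]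
    (t : ℕ) (G : SimpleGraph V) (c : ℕ → ℝ) : ℝ :=
  sInf { x | ∃ f, IsFracCover t G f ∧ x = cliqueCost c f }

/-- θ_t(G,c): minimum total c-cost of an integer t-clique cover. -/
noncomputable def thetaInt {V : Type} [Fintype V] [DecidableEq V]
    (t : ℕ) (G : SimpleGraph V) (c : ℕ → ℝ) : ℝ :=
  sInf { x | ∃ f, IsIntCover t G f ∧ x = cliqueCost c f }

/-- π*_t(G,c): minimum total c-cost of a fractional t-clique decomposition. -/
noncomputable def piFrac {V : Type} [Fintype V] [DecidableEq V]
    (t : ℕ) (G : SimpleGraph V) (c : ℕ → ℝ) : ℝ :=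
  sInf { x | ∃ f, IsFracDecomp t G f ∧ x = cliqueCost c f }

/-- π_t(G,c): minimum total c-cost of an integer t-clique decomposition. -/
noncomputable def piInt {V : Type} [Fintype V] [DecidableEq V]
    (t : ℕ) (G : SimpleGraph V) (c : ℕ → ℝ) : ℝ :=
  sInf { x | ∃ f, IsIntDecomp t G f ∧ x = cliqueCost c f }

/-- `G` is complete multipartite: vertices can be assigned to parts so that
adjacency holds exactly between distinct parts. -/
def IsCompleteMultipartite {V : Type} [Fintype V] [DecidableEq V]
    (G : SimpleGraph V) : Prop :=
  ∃ p : V → ℕ, ∀ u v, G.Adj u v ↔ p u ≠ p v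

section CliqueWeightings

variable {V : Type} [Fintype V] [DecidableEq V]

/-- Replacing every clique `L` by the weighting `w L`, which decomposes exactly the `t`-cliques of
`H` inside `L`, turns a decomposition of `G` into one of `H`. -/
lemma IsFracDecomp.resample {t : ℕ} {G H : SimpleGraph V} (hHG : H ≤ G) {f : Finset V → ℝ}
    (hf : IsFracDecomp t G f) (w : Finset V → Finset V → ℝ) (hw : ∀ L K, 0 ≤ w L K)
    (hwH : ∀ L, IsCliqueOf G L → ∀ K, ¬ IsCliqueOf H K → w L K = 0)
    (hwT : ∀ L T : Finset V, T.card = t → H.IsClique (T : Set V) →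
      ∑ K ∈ univ.filter (fun K => T ⊆ K), w L K = if T ⊆ L then 1 else 0) :
    IsFracDecomp t H (fun K => ∑ L, f L * w L K) := by
  obtain ⟨hf0, hfG, hfT⟩ := hf
  refine ⟨fun K => sum_nonneg fun L _ => mul_nonneg (hf0 L) (hw L K), fun K hK => ?_,
    fun T hT hTH => ?_⟩
  · refine sum_eq_zero fun L _ => ?_
    by_cases hL : IsCliqueOf G L
    · rw [hwH L hL K hK, mul_zero]
    · rw [hfG L hL, zero_mul]
  · rw [sum_comm]
    simp only [← mul_sum]
    simp only [hwT _ T hT hTH, mul_ite, mul_one, mul_zero, ← sum_filter]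
    exact hfT T hT (hTH.mono hHG)

lemma cliqueCost_resample (c : ℕ → ℝ) (f : Finset V → ℝ) (w : Finset V → Finset V → ℝ) :
    cliqueCost c (fun K => ∑ L, f L * w L K) = ∑ L, f L * cliqueCost c (w L) := by
  simp only [cliqueCost, mul_sum]
  rw [sum_comm]
  exact sum_congr rfl fun L _ => sum_congr rfl fun K _ => by ring

lemma IsFracDecomp.sum_mul_card_filter_subset {t : ℕ} {G : SimpleGraph V} {f : Finset V → ℝ}
    (hf : IsFracDecomp t G f) (S : Finset (Finset V))
    (hS : ∀ T ∈ S, T.card = t ∧ G.IsClique (T : Set V)) :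
    ∑ L, f L * ((S.filter (fun T => T ⊆ L)).card : ℝ) = S.card := by
  have h : ∀ L, f L * ((S.filter (fun T => T ⊆ L)).card : ℝ) =
      ∑ T ∈ S, if T ⊆ L then f L else 0 := fun L => by
    rw [← sum_filter, sum_const, nsmul_eq_mul, mul_comm]
  simp only [h]
  rw [sum_comm, card_eq_sum_ones, Nat.cast_sum]
  refine sum_congr rfl fun T hT => ?_
  rw [← sum_filter, hf.2.2 T (hS T hT).1 (hS T hT).2, Nat.cast_one]

lemma isFracDecomp_indicator {t : ℕ} (ht : 1 ≤ t) (G : SimpleGraph V) :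
    IsFracDecomp t G (fun K => if K.card = t ∧ G.IsClique (K : Set V) then 1 else 0) := by
  refine ⟨fun K => by positivity, fun K hK => if_neg fun h => hK ⟨?_, h.2⟩, fun T hT hTG => ?_⟩
  · rw [← card_pos]; omega
  · rw [sum_eq_single T, if_pos ⟨hT, hTG⟩]
    · intro K hK hKT
      refine if_neg fun h => hKT (eq_of_subset_of_card_le (mem_filter.1 hK).2 ?_).symm
      rw [h.1, hT]
    · simp

lemma IsFracDecomp.cliqueCost_nonneg {t : ℕ} {G : SimpleGraph V} {f : Finset V → ℝ}
    (hf : IsFracDecomp t G f) {c : ℕ → ℝ} (hc : ∀ i, 1 ≤ i → 0 ≤ c i) : 0 ≤ cliqueCost c f := by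
  refine sum_nonneg fun K _ => ?_
  by_cases hK : IsCliqueOf G K
  · exact mul_nonneg (hc _ hK.1.card_pos) (hf.1 K)
  · rw [hf.2.1 K hK, mul_zero]

lemma cliqueCost_single (c : ℕ → ℝ) (L : Finset V) :
    cliqueCost c (fun K => if K = L then 1 else 0) = c L.card := by
  simp [cliqueCost]

lemma sum_filter_single (T L : Finset V) :
    ∑ K ∈ univ.filter (fun K => T ⊆ K), (if K = L then (1 : ℝ) else 0) =
      if T ⊆ L then 1 else 0 := by
  rw [sum_ite_eq']
  simp

/-- Large cliques can be split uniformly into cliques of size `b`. -/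
lemma IsFracDecomp.exists_card_le {t b : ℕ} (ht : 1 ≤ t) (htb : t ≤ b) {G : SimpleGraph V}
    {f : Finset V → ℝ} (hf : IsFracDecomp t G f) {c : ℕ → ℝ} (hc : ∀ i, 1 ≤ i → 0 ≤ c i) :
    ∃ g, IsFracDecomp t G g ∧ (∀ K, b < K.card → g K = 0) ∧
      cliqueCost c g ≤ cliqueCost c f +
        c b / (b.choose t : ℝ) * ((Fintype.card V).choose t : ℝ) := by
  set w : Finset V → Finset V → ℝ := fun L K => if L.card ≤ b then (if K = L then 1 else 0) else
    if K ∈ L.powersetCard b then 1 / ((L.card - t).choose (b - t) : ℝ) else 0 with hw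
  have hchoose : ∀ L : Finset V, b < L.card → (0 : ℝ) < ((L.card - t).choose (b - t) : ℝ) :=
    fun L hL => by exact_mod_cast Nat.choose_pos (by omega)
  have hbt : (0 : ℝ) < b.choose t := by exact_mod_cast Nat.choose_pos htb
  refine ⟨_, hf.resample le_rfl w ?_ ?_ ?_, ?_, ?_⟩
  · intro L K
    simp only [hw]
    positivity
  · intro L hL K hK
    simp only [hw]
    split_ifs with h1 h2 h2
    · exact absurd (h2 ▸ hL) hK
    · rfl
    · rw [mem_powersetCard] at h2
      exact absurd ⟨card_pos.1 (by omega), hL.2.subset (coe_subset.2 h2.1)⟩ hK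
    · rfl
  · intro L T hT _
    by_cases hL : L.card ≤ b
    · simp only [hw, if_pos hL]
      exact sum_filter_single T L
    · simp only [hw, if_neg hL]
      rw [← sum_filter, filter_filter, sum_const, nsmul_eq_mul]
      have hset : univ.filter (fun K => T ⊆ K ∧ K ∈ L.powersetCard b) =
          (L.powersetCard b).filter (fun K => T ⊆ K) := by
        ext K; simp [and_comm]
      rw [hset]
      split_ifs with hTL
      · rw [card_filter_powersetCard_subset _ _ _ hTL (by omega), hT]
        exact mul_one_div_cancel (hchoose L (by omega)).ne'
      · rw [filter_false_of_mem, card_empty, Nat.cast_zero, zero_mul]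
        exact fun K hK hTK => hTL (hTK.trans (mem_powersetCard.1 hK).1)
  · intro K hK
    refine sum_eq_zero fun L _ => mul_eq_zero_of_right _ ?_
    simp only [hw]
    split_ifs with h1 h2 h2
    · subst h2; omega
    · rfl
    · rw [mem_powersetCard] at h2; omega
    · rfl
  · rw [cliqueCost_resample]
    have hcost : ∀ L, f L * cliqueCost c (w L) ≤ c L.card * f L +
        c b / (b.choose t : ℝ) * (f L * (((univ.filter fun T : Finset V =>
          T.card = t ∧ G.IsClique (T : Set V)).filter (fun T => T ⊆ L)).card : ℝ)) := by
      intro L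
      by_cases hLG : IsCliqueOf G L
      swap
      · simp [hf.2.1 L hLG]
      have hset : (univ.filter fun T : Finset V =>
          T.card = t ∧ G.IsClique (T : Set V)).filter (fun T => T ⊆ L) = L.powersetCard t := by
        ext T
        simp only [mem_filter, mem_univ, true_and, mem_powersetCard]
        exact ⟨fun h => ⟨h.2, h.1.1⟩, fun h => ⟨⟨h.2, hLG.2.subset (coe_subset.2 h.1)⟩, h.1⟩⟩
      rw [hset, card_powersetCard]
      have hfL := hf.1 L
      have hcb := hc b (by omega)
      have hcL := hc _ hLG.1.card_pos
      by_cases hL : L.card ≤ b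
      · simp only [hw, if_pos hL, cliqueCost_single]
        have : 0 ≤ c b / (b.choose t : ℝ) * (f L * (L.card.choose t : ℝ)) := by positivity
        linarith
      · have hwL : cliqueCost c (w L) = c b / (b.choose t : ℝ) * (L.card.choose t : ℝ) := by
          simp only [hw, if_neg hL, cliqueCost, mul_ite, mul_zero]
          rw [← sum_filter, filter_mem_eq_inter, univ_inter,
            sum_congr rfl (fun K hK => by rw [(mem_powersetCard.1 hK).2]), sum_const,
            card_powersetCard, nsmul_eq_mul]
          have h := hchoose L (by omega)
          have hmul : (L.card.choose b : ℝ) * (b.choose t : ℝ) =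
              (L.card.choose t : ℝ) * ((L.card - t).choose (b - t) : ℝ) := by
            exact_mod_cast Nat.choose_mul htb
          field_simp
          linear_combination c b * hmul
        rw [hwL]
        have : 0 ≤ c L.card * f L := by positivity
        linarith
    refine (sum_le_sum fun L _ => hcost L).trans ?_
    rw [sum_add_distrib, ← mul_sum, hf.sum_mul_card_filter_subset _ (fun T hT => by simpa using hT)]
    refine add_le_add le_rfl (mul_le_mul_of_nonneg_left ?_ (div_nonneg (hc b (by omega)) hbt.le))
    rw [← card_univ, ← card_powersetCard]
    exact_mod_cast card_le_card fun T hT => by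
      simp only [mem_filter, mem_univ, true_and] at hT
      exact mem_powersetCard.2 ⟨subset_univ _, hT.1⟩

lemma card_filter_isClique_not_isClique_le {t : ℕ} (ht : 2 ≤ t) (G H : SimpleGraph V) :
    (univ.filter fun T : Finset V => (T.card = t ∧ G.IsClique (T : Set V)) ∧
      ¬ H.IsClique (T : Set V)).card ≤
      (G.edgeSet \ H.edgeSet).ncard * Fintype.card V ^ (t - 2) := by
  rw [Set.ncard_eq_toFinset_card']
  refine (card_le_card (t := (G.edgeSet \ H.edgeSet).toFinset.biUnion fun e =>
    (univ.powersetCard t).filter fun T => e.toFinset ⊆ T) ?_).trans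
    (card_biUnion_le_card_mul _ _ _ ?_)
  · intro T hT
    obtain ⟨⟨hTt, hTG⟩, hTH⟩ := (mem_filter.1 hT).2
    simp only [SimpleGraph.IsClique, Set.Pairwise] at hTH
    push Not at hTH
    obtain ⟨u, hu, v, hv, huv, hH⟩ := hTH
    simp only [mem_biUnion, mem_filter, Set.mem_toFinset, mem_powersetCard]
    refine ⟨s(u, v), ⟨hTG hu hv huv, hH⟩, ⟨subset_univ _, hTt⟩, fun x hx => ?_⟩
    rw [Sym2.mem_toFinset, Sym2.mem_iff] at hx
    rcases hx with rfl | rfl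
    exacts [hu, hv]
  · intro e he
    have he2 : e.toFinset.card = 2 :=
      Sym2.card_toFinset_of_not_isDiag _ (G.not_isDiag_of_mem_edgeSet (Set.mem_toFinset.1 he).1)
    rw [card_filter_powersetCard_subset _ _ _ (subset_univ _) (by omega), he2, card_univ]
    exact (Nat.choose_le_pow _ _).trans (Nat.pow_le_pow_left (Nat.sub_le _ _) _)

/-- Cliques of size at most `b` broken in the subgraph `H` can be split into `t`-cliques. -/
lemma IsFracDecomp.exists_of_le {t b : ℕ} (ht : 2 ≤ t) {G H : SimpleGraph V}
    (hHG : H ≤ G) {f : Finset V → ℝ} (hf : IsFracDecomp t G f) (hfb : ∀ K, b < K.card → f K = 0)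
    {c : ℕ → ℝ} (hc : ∀ i, 1 ≤ i → 0 ≤ c i) :
    ∃ g, IsFracDecomp t H g ∧ cliqueCost c g ≤ cliqueCost c f +
      c t * (b.choose t : ℝ) *
        ((G.edgeSet \ H.edgeSet).ncard : ℝ) * (Fintype.card V : ℝ) ^ (t - 2) := by
  set w : Finset V → Finset V → ℝ := fun L K =>
    if H.IsClique (L : Set V) then (if K = L then 1 else 0) else
      if K ∈ (L.powersetCard t).filter (fun M : Finset V => H.IsClique (M : Set V)) then 1 else 0 with hw
  have hct := hc t (by omega)
  refine ⟨_, hf.resample hHG w ?_ ?_ ?_, ?_⟩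
  · intro L K
    simp only [hw]
    positivity
  · intro L hL K hK
    simp only [hw]
    split_ifs with h1 h2 h2
    · subst h2
      exact absurd ⟨hL.1, h1⟩ hK
    · rfl
    · rw [mem_filter, mem_powersetCard] at h2
      exact absurd ⟨card_pos.1 (by omega), h2.2⟩ hK
    · rfl
  · intro L T hT hTH
    by_cases hL : H.IsClique (L : Set V)
    · simp only [hw, if_pos hL]
      exact sum_filter_single T L
    · simp only [hw, if_neg hL]
      rw [sum_eq_single T]
      · simp [hT, hTH]
      · intro K hK hKT
        refine if_neg fun h => hKT (eq_of_subset_of_card_le (mem_filter.1 hK).2 ?_).symm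
        rw [mem_filter, mem_powersetCard] at h
        omega
      · simp
  · rw [cliqueCost_resample]
    set S := univ.filter fun T : Finset V => (T.card = t ∧ G.IsClique (T : Set V)) ∧
      ¬ H.IsClique (T : Set V) with hS
    have hcost : ∀ L, f L * cliqueCost c (w L) ≤ c L.card * f L +
        c t * (b.choose t : ℝ) * (f L * ((S.filter (fun T => T ⊆ L)).card : ℝ)) := by
      intro L
      by_cases hLG : IsCliqueOf G L
      swap
      · simp [hf.2.1 L hLG]
      by_cases hLb : b < L.card
      · simp [hfb L hLb]
      have hfL := hf.1 L
      have hcL := mul_nonneg (hc _ hLG.1.card_pos) hfL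
      have hnn : 0 ≤ c t * (b.choose t : ℝ) * (f L * ((S.filter (fun T => T ⊆ L)).card : ℝ)) := by
        positivity
      by_cases hL : H.IsClique (L : Set V)
      · simp only [hw, if_pos hL, cliqueCost_single]
        linarith
      · have hwL : cliqueCost c (w L) ≤ c t * (L.card.choose t : ℝ) := by
          simp only [hw, if_neg hL, cliqueCost, mul_ite, mul_zero, mul_one]
          rw [← sum_filter, filter_mem_eq_inter, univ_inter,
            sum_congr rfl (fun K hK => by rw [(mem_powersetCard.1 (mem_filter.1 hK).1).2]),
            sum_const, nsmul_eq_mul, mul_comm, ← card_powersetCard]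
          exact mul_le_mul_of_nonneg_left (by exact_mod_cast card_filter_le _ _) hct
        have hchoose : L.card.choose t ≤ b.choose t * (S.filter (fun T => T ⊆ L)).card := by
          rcases lt_or_ge L.card t with hLt | hLt
          · rw [Nat.choose_eq_zero_of_lt hLt]
            exact Nat.zero_le _
          · refine (Nat.choose_le_choose t (not_lt.1 hLb)).trans (Nat.le_mul_of_pos_right _ ?_)
            simp only [SimpleGraph.IsClique, Set.Pairwise] at hL
            push Not at hL
            obtain ⟨u, hu, v, hv, huv, hH⟩ := hL
            obtain ⟨T, huvT, hTL, hT⟩ := exists_subsuperset_card_eq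
              (show {u, v} ⊆ L from insert_subset hu (singleton_subset_iff.2 hv))
              (by rwa [card_pair huv]) hLt
            refine card_pos.2 ⟨T, ?_⟩
            simp only [hS, mem_filter, mem_univ, true_and]
            exact ⟨⟨⟨hT, hLG.2.subset (coe_subset.2 hTL)⟩, fun hTH => hH
              (hTH (huvT (by simp)) (huvT (by simp)) huv)⟩, hTL⟩
        have hchoose' : (L.card.choose t : ℝ) ≤
            (b.choose t : ℝ) * ((S.filter (fun T => T ⊆ L)).card : ℝ) := by
          exact_mod_cast hchoose
        calc f L * cliqueCost c (w L)
            ≤ f L * (c t * ((b.choose t : ℝ) * ((S.filter (fun T => T ⊆ L)).card : ℝ))) :=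
              mul_le_mul_of_nonneg_left
                (hwL.trans (mul_le_mul_of_nonneg_left hchoose' hct)) hfL
          _ ≤ _ := by linarith
    refine (sum_le_sum fun L _ => hcost L).trans ?_
    rw [sum_add_distrib, ← mul_sum,
      hf.sum_mul_card_filter_subset S (fun T hT => (mem_filter.1 hT).2.1), mul_assoc (c t * _)]
    refine add_le_add le_rfl (mul_le_mul_of_nonneg_left ?_ (by positivity))
    exact_mod_cast card_filter_isClique_not_isClique_le ht G H

end CliqueWeightings

lemma cost_le_of_step {t : ℕ} {c : ℕ → ℝ} (hstep : ∀ i, t ≤ i → c (i + 1) - c i ≤ c t) (k : ℕ) :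
    c (t + k) ≤ (k + 1) * c t := by
  induction k with
  | zero => simp
  | succ k ih =>
    have h := hstep (t + k) (by omega)
    rw [← add_assoc]
    push_cast
    linarith

lemma cost_div_choose_mul_choose_le {n t b : ℕ} (ht : 2 ≤ t) (hb : t + 1 ≤ b) {c : ℕ → ℝ}
    (hct : 0 ≤ c t) (hstep : ∀ i, t ≤ i → c (i + 1) - c i ≤ c t) :
    c b / (b.choose t : ℝ) * (n.choose t : ℝ) ≤
      2 * c t * (n : ℝ) ^ t / ((b : ℝ) - (t : ℝ)) ^ (t - 1) := by
  obtain ⟨k, rfl⟩ : ∃ k, b = t + k := ⟨b - t, by omega⟩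
  have hk : (0 : ℝ) < k := by exact_mod_cast (by omega : 0 < k)
  have hcb := cost_le_of_step hstep k
  have hfac : (0 : ℝ) < t.factorial := by exact_mod_cast t.factorial_pos
  have hlow : ((k : ℝ) + 1) ^ t ≤ t.factorial * ((t + k).choose t : ℝ) := by
    have h := Nat.pow_sub_le_descFactorial (t + k) t
    rw [Nat.descFactorial_eq_factorial_mul_choose,
      show t + k + 1 - t = k + 1 by omega] at h
    exact_mod_cast h
  have hup : (t.factorial : ℝ) * (n.choose t : ℝ) ≤ (n : ℝ) ^ t := by
    have h := Nat.descFactorial_le_pow n t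
    rw [Nat.descFactorial_eq_factorial_mul_choose] at h
    exact_mod_cast h
  have hpos : (0 : ℝ) < ((t + k).choose t : ℝ) := by exact_mod_cast Nat.choose_pos (by omega)
  calc c (t + k) / ((t + k).choose t : ℝ) * (n.choose t : ℝ)
      ≤ ((k + 1) * c t) / ((t + k).choose t : ℝ) * (n.choose t : ℝ) := by gcongr
    _ = (k + 1) * c t * (t.factorial * (n.choose t : ℝ)) /
          (t.factorial * ((t + k).choose t : ℝ)) := by field_simp
    _ ≤ (k + 1) * c t * (n : ℝ) ^ t / ((k : ℝ) + 1) ^ t := by gcongr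
    _ = c t * (n : ℝ) ^ t / ((k : ℝ) + 1) ^ (t - 1) := by
        obtain ⟨s, rfl⟩ : ∃ s, t = s + 1 := ⟨t - 1, by omega⟩
        rw [Nat.add_sub_cancel, pow_succ ((k : ℝ) + 1)]
        field_simp
    _ ≤ c t * (n : ℝ) ^ t / (k : ℝ) ^ (t - 1) := by gcongr; linarith
    _ ≤ 2 * c t * (n : ℝ) ^ t / (k : ℝ) ^ (t - 1) := by gcongr; linarith
    _ = _ := by push_cast; ring

/-- Lemma 5.1: deleting edges does not increase the fractional `t`-clique
decomposition number by much: for every `b ≥ t + 1`,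
`π*_t(G',c) ≤ π*_t(G,c) + 2 c_t nᵗ/(b-t)^{t-1} + c_t (b choose t) |E(G)\E(G')| n^{t-2}`. -/
theorem stmt16 (n t : ℕ) (ht : 2 ≤ t) (c : ℕ → ℝ) (hc : ∀ i, 1 ≤ i → 0 ≤ c i)
    (hstep : ∀ i, t ≤ i → c (i + 1) - c i ≤ c t)
    (G G' : SimpleGraph (Fin n)) (hsub : G' ≤ G) (b : ℕ) (hb : t + 1 ≤ b) :
    piFrac t G' c ≤ piFrac t G c +
      2 * c t * (n : ℝ) ^ t / ((b : ℝ) - (t : ℝ)) ^ (t - 1) +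
      c t * (b.choose t : ℝ) * ((G.edgeSet \ G'.edgeSet).ncard : ℝ) * (n : ℝ) ^ (t - 2) := by
  have ht1 : 1 ≤ t := by omega
  have hbdd : BddBelow { x | ∃ f, IsFracDecomp t G' f ∧ x = cliqueCost c f } :=
    ⟨0, by rintro _ ⟨f, hf, rfl⟩; exact hf.cliqueCost_nonneg hc⟩
  rw [add_assoc, ← sub_le_iff_le_add]
  refine le_csInf ⟨_, _, isFracDecomp_indicator ht1 G, rfl⟩ ?_
  rintro _ ⟨f, hf, rfl⟩
  obtain ⟨g, hg, hgb, hgf⟩ := hf.exists_card_le ht1 (by omega : t ≤ b) hc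
  obtain ⟨h, hh, hhg⟩ := hg.exists_of_le ht hsub hgb hc
  have hle : piFrac t G' c ≤ cliqueCost c h := csInf_le hbdd ⟨h, hh, rfl⟩
  have hsplit := cost_div_choose_mul_choose_le (n := n) ht hb (hc t ht1) hstep
  rw [Fintype.card_fin] at hgf hhg
  linarith
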